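/- Let α ≥ 2, c₁ ≥ 0, p a positive odd integer, c₃ ≠ 0, c₂ = (1/2)(α−1)c₃², β₁ ∈ (0,1) and β₂ = (β₁+1)/2. Define f(x) = −c₁·x^p − c₂·x^{⟨β₁⟩}, g(x) = c₃·x^{⟨β₂⟩} and V(x) = |x|^α, and set γ = (α + 2β₂ − 2)/α. Then 0 < γ < 1, and for every c with 0 < c ≤ (γ/2)c₃²α² and every x ≠ 0, V(x)·( c·V(x)^γ + 𝓛V(x) ) ≤ (γ/2)·( V'(x)·g(x) )². -/

import Mathlib

/-!
Away from the origin every term is an explicit power of `|x|`. The value of `c₂` makes the term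
`-c₂ x^{⟨β₁⟩}` of the drift cancel the Itô correction `(1/2) g² V''` in `𝓛V`, so
`𝓛V(x) = -c₁ α |x|^(α-1+p) ≤ 0`; and `γ α = α + β₁ - 1` makes `c V^(1+γ)` and
`(γ/2) (V' g)²` multiples of the same power `|x|^(2α+β₁-1)`, with coefficients `c` and
`(γ/2) c₃² α²`.
-/

theorem hasDerivAt_abs_rpow_of_ne_zero (r : ℝ) {x : ℝ} (hx : x ≠ 0) :
    HasDerivAt (fun y : ℝ => |y| ^ r) (r * Real.sign x * |x| ^ (r - 1)) x := by
  have h := (hasDerivAt_abs hx).rpow_const (p := r) (Or.inl (abs_ne_zero.mpr hx))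
  convert h using 1
  rcases lt_or_gt_of_ne hx with h0 | h0
  · simp [Real.sign_of_neg h0, sign_neg h0]
  · simp [Real.sign_of_pos h0, sign_pos h0]

theorem deriv_deriv_abs_rpow (r : ℝ) {x : ℝ} (hx : x ≠ 0) :
    deriv (deriv (fun y : ℝ => |y| ^ r)) x = r * (r - 1) * |x| ^ (r - 2) := by
  -- The sign is locally constant off the origin, so it passes through the second derivative.
  have hev : deriv (fun y : ℝ => |y| ^ r) =ᶠ[nhds x]
      fun y => r * Real.sign x * |y| ^ (r - 1) := by
    rcases lt_or_gt_of_ne hx with h0 | h0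
    · filter_upwards [Iio_mem_nhds h0] with y hy
      rw [(hasDerivAt_abs_rpow_of_ne_zero r (ne_of_lt hy)).deriv, Real.sign_of_neg h0, Real.sign_of_neg hy]
    · filter_upwards [Ioi_mem_nhds h0] with y hy
      rw [(hasDerivAt_abs_rpow_of_ne_zero r (ne_of_gt hy)).deriv, Real.sign_of_pos h0, Real.sign_of_pos hy]
  rw [hev.deriv_eq, ((hasDerivAt_abs_rpow_of_ne_zero (r - 1) hx).const_mul _).deriv,
    show r - 1 - 1 = r - 2 by ring]
  have hs : Real.sign x * Real.sign x = 1 := by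
    rcases Real.sign_apply_eq_of_ne_zero x hx with h | h <;> simp [h]
  linear_combination (r * (r - 1) * |x| ^ (r - 2)) * hs


/-- Example 1, verification of condition (30).  Let `α ≥ 2`, `c₁ ≥ 0`,
`p` a positive odd integer, `c₃ ≠ 0`, `c₂ = (1/2)(α−1)c₃²`, `β₁ ∈ (0,1)`,
`β₂ = (β₁+1)/2`.  With `f x = −c₁ x^p − c₂ x^{⟨β₁⟩}`, `g x = c₃ x^{⟨β₂⟩}` (signed powers
`x^{⟨r⟩} = sign x · |x|^r`), `V x = |x|^α` and `γ = (α + 2β₂ − 2)/α`, one has `0 < γ < 1`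
and, for every `c` with `0 < c ≤ (γ/2) c₃² α²` and every `x ≠ 0`,
`V(x)·(c V(x)^γ + 𝓛V(x)) ≤ (γ/2)·(V'(x) g(x))²` where
`𝓛V(x) = V'(x) f(x) + (1/2) g(x)² V''(x)`. -/
theorem finite_time_condition_example_one
    (α c₁ c₂ c₃ β₁ β₂ γ : ℝ) (p : ℕ)
    (hα : 2 ≤ α) (hc₁ : 0 ≤ c₁) (hp : Odd p) (hp0 : 0 < p) (hc₃ : c₃ ≠ 0)
    (hc₂ : c₂ = (1 / 2) * (α - 1) * c₃ ^ 2)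
    (hβ₁ : 0 < β₁ ∧ β₁ < 1) (hβ₂ : β₂ = (β₁ + 1) / 2)
    (hγ : γ = (α + 2 * β₂ - 2) / α)
    (f g V : ℝ → ℝ)
    (hf : ∀ x : ℝ, f x = -c₁ * x ^ p - c₂ * (Real.sign x * |x| ^ β₁))
    (hg : ∀ x : ℝ, g x = c₃ * (Real.sign x * |x| ^ β₂))
    (hV : ∀ x : ℝ, V x = |x| ^ α) :
    (0 < γ ∧ γ < 1) ∧
      ∀ c : ℝ, 0 < c → c ≤ (γ / 2) * c₃ ^ 2 * α ^ 2 →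
        ∀ x : ℝ, x ≠ 0 →
          V x * (c * V x ^ γ +
              (deriv V x * f x + (1 / 2) * (g x) ^ 2 * deriv (deriv V) x))
            ≤ (γ / 2) * (deriv V x * g x) ^ 2 := by
  obtain ⟨hb0, hb1⟩ := hβ₁
  have hα0 : 0 < α := by linarith
  have hγα : α * γ = α + β₁ - 1 := by
    rw [hγ, hβ₂]; field_simp; ring
  have hγ0 : 0 < γ := by
    rw [hγ, hβ₂]; apply div_pos <;> linarith
  have hγ1 : γ < 1 := by
    rw [hγ, hβ₂, div_lt_one hα0]; linarith
  refine ⟨⟨hγ0, hγ1⟩, fun c _ hc x hx => ?_⟩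
  obtain rfl : V = fun y => |y| ^ α := funext hV
  rw [(hasDerivAt_abs_rpow_of_ne_zero α hx).deriv, deriv_deriv_abs_rpow α hx, hf, hg]
  have ht : 0 < |x| := abs_pos.mpr hx
  have hs : Real.sign x ^ 2 = 1 := by
    rcases Real.sign_apply_eq_of_ne_zero x hx with h | h <;> simp [h]
  have hsx : Real.sign x * x ^ p = |x| ^ p := by
    rcases lt_or_gt_of_ne hx with h0 | h0
    · rw [Real.sign_of_neg h0, abs_of_neg h0, hp.neg_pow]; ring
    · rw [Real.sign_of_pos h0, abs_of_pos h0, one_mul]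
  beta_reduce
  have e1 : |x| ^ (α - 1) = |x| ^ α / |x| := by
    rw [Real.rpow_sub ht, Real.rpow_one]
  have e2 : |x| ^ (α - 2) = |x| ^ α / |x| ^ 2 := by
    rw [Real.rpow_sub ht, Real.rpow_two]
  have e3 : (|x| ^ β₂) ^ 2 = |x| ^ β₁ * |x| := by
    rw [← Real.rpow_mul_natCast ht.le, hβ₂, ← Real.rpow_add_one ht.ne']
    congr 1; push_cast; ring
  have e4 : (|x| ^ α) ^ γ = |x| ^ α * |x| ^ β₁ / |x| := by
    rw [← Real.rpow_mul ht.le, hγα, Real.rpow_sub ht, Real.rpow_add ht, Real.rpow_one]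
  rw [e1, e2, e4, hc₂]
  have hA : 0 < |x| ^ α := Real.rpow_pos_of_pos ht _
  have hB : 0 < |x| ^ β₁ := Real.rpow_pos_of_pos ht _
  have hP : 0 < |x| ^ p := pow_pos ht _
  generalize |x| ^ α = A at *
  generalize |x| ^ β₁ = B at *
  generalize |x| ^ β₂ = D at *
  generalize |x| ^ p = P at *
  generalize Real.sign x = s at *
  generalize |x| = t at *
  have hdiff : (γ / 2) * (α * s * (A / t) * (c₃ * (s * D))) ^ 2
      - A * (c * (A * B / t) + (α * s * (A / t)
          * (-c₁ * x ^ p - 1 / 2 * (α - 1) * c₃ ^ 2 * (s * B))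
        + 1 / 2 * (c₃ * (s * D)) ^ 2 * (α * (α - 1) * (A / t ^ 2))))
      = ((γ / 2) * c₃ ^ 2 * α ^ 2 - c) * (A ^ 2 * B / t) + c₁ * α * A ^ 2 * P / t := by
    have h1 : (γ / 2) * (α * s * (A / t) * (c₃ * (s * D))) ^ 2
        = (γ / 2) * α ^ 2 * c₃ ^ 2 * (A / t) ^ 2 * (s ^ 2) ^ 2 * D ^ 2 := by ring
    have h2 : (c₃ * (s * D)) ^ 2 = c₃ ^ 2 * s ^ 2 * D ^ 2 := by ring
    have h3 : α * s * (A / t) * (-c₁ * x ^ p - 1 / 2 * (α - 1) * c₃ ^ 2 * (s * B))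
        = α * (A / t) * (-c₁ * (s * x ^ p) - 1 / 2 * (α - 1) * c₃ ^ 2 * (s ^ 2 * B)) := by ring
    rw [h1, h2, h3, hs, hsx, e3]
    field_simp
    ring
  have hn1 : 0 ≤ ((γ / 2) * c₃ ^ 2 * α ^ 2 - c) * (A ^ 2 * B / t) :=
    mul_nonneg (sub_nonneg.mpr hc) (by positivity)
  have hn2 : 0 ≤ c₁ * α * A ^ 2 * P / t := by positivity
  linarith
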